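/- Fix positive integers c, m, s, let A_1,…,A_s be nonzero 0-1 matrices each with c rows and m columns, and for n ≥ m let I_n ⊆ R_n be the ideal generated by the Sym(n)-orbits of x^{A_1},…,x^{A_s} (each A_i regarded as a c×n matrix by appending zero columns). Then there exist a polynomial p with rational coefficients and an integer N such that for all n ≥ N, the number of Sym(n)-orbits on the (finite) set of minimal primes of I_n equals p(n). -/

import Mathlib

open MvPolynomial Finset

noncomputable section

/-- The squarefree monomial `x^B` with exponent matrix `B`, columns given as subsets of `[c]`. -/
def matMon (K : Type*) [CommSemiring K] {c n : ℕ}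
    (B : Fin n → Finset (Fin c)) : MvPolynomial (Fin c × Fin n) K :=
  ∏ j : Fin n, ∏ i ∈ B j, X (i, j)

/-- Pad a `c × m` matrix with zero columns to a `c × n` matrix. -/
def pad {c m : ℕ} (n : ℕ) (A : Fin m → Finset (Fin c)) : Fin n → Finset (Fin c) :=
  fun j => if h : (j : ℕ) < m then A ⟨j, h⟩ else ∅

/-- The ideal `I_n ⊆ R_n` generated by the `Sym(n)`-orbits of `x^{A_1}, …, x^{A_s}`. -/
def chainIdeal (K : Type*) [CommSemiring K] {c m s : ℕ}
    (A : Fin s → Fin m → Finset (Fin c)) (n : ℕ) :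
    Ideal (MvPolynomial (Fin c × Fin n) K) :=
  Ideal.span {p | ∃ (i : Fin s) (σ : Equiv.Perm (Fin n)),
    p = rename (fun v : Fin c × Fin n => (v.1, σ v.2)) (matMon K (pad n (A i)))}

/-!
The minimal primes of a squarefree monomial ideal are generated by the variables in the minimal
vertex covers of the hypergraph of supports of its generators. For `I_n` the vertices are the
positions of a `c × n` matrix, and a cover is determined up to column permutations by how many of
its columns equal each `T ⊆ [c]`, so orbits of minimal primes correspond to vectors `u` of such
counts with sum `n`. A set fails to be a cover exactly when some `m` of its columns avoid the `m`
columns of some `A_i`, and minimality is tested by changing a single column; hence only the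
truncated vector `min u (m + 1)` matters. The vectors with sum `n` and truncation `t` arise by
distributing the remaining `n - ∑ t` columns among the types `T` with `t T = m + 1`, and the number
of ways to do this is a polynomial in `n` for large `n`.
-/

open Filter

section EventuallyPolynomial

/-- A sequence that agrees with a polynomial function for all large arguments. -/
def IsEventuallyPolynomial {R : Type*} [Semiring R] (f : ℕ → R) : Prop :=
  ∃ p : Polynomial R, ∀ᶠ n : ℕ in atTop, f n = p.eval (n : R)

namespace IsEventuallyPolynomial

variable {R : Type*} [Semiring R]

theorem congr {f g : ℕ → R} (hf : IsEventuallyPolynomial f) (h : f =ᶠ[atTop] g) :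
    IsEventuallyPolynomial g := by
  obtain ⟨p, hp⟩ := hf
  exact ⟨p, by filter_upwards [hp, h] with n hpn hn using hn ▸ hpn⟩

theorem sum {ι : Type*} (s : Finset ι) {f : ι → ℕ → R}
    (hf : ∀ i, IsEventuallyPolynomial (f i)) :
    IsEventuallyPolynomial fun n => ∑ i ∈ s, f i n := by
  choose p hp using hf
  refine ⟨∑ i ∈ s, p i, ?_⟩
  filter_upwards [(eventually_all_finset s).2 fun i _ => hp i] with n hn
  rw [Polynomial.eval_finsetSum]
  exact Finset.sum_congr rfl hn

end IsEventuallyPolynomial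

theorem isEventuallyPolynomial_multichoose_sub (F : Type*) [Field F] [CharZero F] (a b : ℕ) :
    IsEventuallyPolynomial fun n => (a.multichoose (n - b) : F) := by
  rcases a with _ | a
  · refine ⟨0, ?_⟩
    filter_upwards [eventually_gt_atTop b] with n hn
    obtain ⟨e, he⟩ := Nat.exists_eq_add_of_lt (Nat.sub_pos_of_lt hn)
    simp [he]
  · refine ⟨Polynomial.preHilbertPoly F a b, ?_⟩
    filter_upwards [eventually_ge_atTop b] with n hn
    rw [Polynomial.preHilbertPoly_eq_choose_sub_add F a hn, Nat.multichoose_eq,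
      show a + 1 + (n - b) - 1 = n - b + a by omega, ← Nat.choose_symm_add]

end EventuallyPolynomial

section Truncation

/-- A property of multiplicity vectors that cannot tell apart multiplicities `≥ k`. -/
def DependsOnTruncation {D : Type*} (k : ℕ) (Q : (D → ℕ) → Prop) : Prop :=
  ∀ ⦃u w : D → ℕ⦄, (∀ d, min (u d) k = min (w d) k) → (Q u ↔ Q w)

variable {D : Type*}

theorem card_piAntidiag_eq_multichoose [DecidableEq D] (s : Finset D) (n : ℕ) :
    #(piAntidiag s n) = (#s).multichoose n := by
  rw [← card_finsuppAntidiag_nat_eq_multichoose]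
  refine (Finset.card_bij (s := s.finsuppAntidiag n) (fun v _ => ⇑v) (fun v hv => ?_)
    (fun v _ w _ h => DFunLike.coe_injective h) fun u hu => ?_).symm
  · obtain ⟨hsum, hsupp⟩ := mem_finsuppAntidiag.1 hv
    exact mem_piAntidiag.2 ⟨hsum, fun i hi => hsupp (Finsupp.mem_support_iff.2 hi)⟩
  · obtain ⟨hsum, hsupp⟩ := mem_piAntidiag.1 hu
    exact ⟨Finsupp.onFinset s u hsupp, mem_finsuppAntidiag.2
      ⟨hsum, Finsupp.support_onFinset_subset⟩, rfl⟩

variable [Fintype D]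

theorem mem_piAntidiag_iff_sum_univ [DecidableEq D] {s : Finset D} {n : ℕ} {u : D → ℕ} :
    u ∈ piAntidiag s n ↔ ∑ d, u d = n ∧ ∀ d, u d ≠ 0 → d ∈ s := by
  rw [mem_piAntidiag]
  refine and_congr_left fun hsupp => ?_
  rw [Finset.sum_subset (Finset.subset_univ s) fun d _ hd => by_contra fun h => hd (hsupp d h)]

theorem filter_truncation_piAntidiag_eq_map [DecidableEq D] {k n : ℕ} {t : D → ℕ}
    (hn : ∑ d, t d ≤ n) (ht : ∀ d, t d ≤ k) :
    {u ∈ piAntidiag (univ : Finset D) n | (fun d => min (u d) k) = t} =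
      (piAntidiag ({d | t d = k} : Finset D) (n - ∑ d, t d)).map (addRightEmbedding t) := by
  ext u
  simp only [Finset.mem_filter, Finset.mem_map, mem_piAntidiag_iff_sum_univ, Finset.mem_univ,
    implies_true, and_true, true_and, addRightEmbedding_apply, funext_iff]
  constructor
  · rintro ⟨hsum, hu⟩
    have hle (d : D) : t d ≤ u d := hu d ▸ min_le_left _ _
    refine ⟨u - t, ⟨?_, fun d hd => ?_⟩, fun d => Nat.sub_add_cancel (hle d)⟩
    · rw [← hsum, ← Finset.sum_tsub_distrib _ fun d _ => hle d]
      rfl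
    · have := hu d
      rw [Pi.sub_apply] at hd
      omega
  · rintro ⟨v, ⟨hsum, hv⟩, huv⟩
    obtain rfl : v + t = u := funext huv
    refine ⟨?_, fun d => ?_⟩
    · simp only [Pi.add_apply, Finset.sum_add_distrib, hsum]
      omega
    · have := hv d
      have := ht d
      rw [Pi.add_apply]
      omega

theorem card_filter_truncation_piAntidiag [DecidableEq D] {k n : ℕ} {t : D → ℕ}
    (hn : ∑ d, t d ≤ n) (ht : ∀ d, t d ≤ k) :
    #{u ∈ piAntidiag (univ : Finset D) n | (fun d => min (u d) k) = t} =
      (#{d | t d = k}).multichoose (n - ∑ d, t d) := by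
  rw [filter_truncation_piAntidiag_eq_map hn ht, card_map, card_piAntidiag_eq_multichoose]

open scoped Classical in
theorem ncard_eq_sum_truncation {k : ℕ} {Q : (D → ℕ) → Prop} (hQ : DependsOnTruncation k Q)
    (n : ℕ) :
    {u : D → ℕ | ∑ d, u d = n ∧ Q u}.ncard =
      ∑ t ∈ Fintype.piFinset (fun _ : D => range (k + 1)) with Q t,
        #{u ∈ piAntidiag univ n | (fun d => min (u d) k) = t} := by
  have hset : {u : D → ℕ | ∑ d, u d = n ∧ Q u} = ({u ∈ piAntidiag univ n | Q u} : Finset _) := by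
    ext u
    simp
  have hQmin (u : D → ℕ) : Q u ↔ Q fun d => min (u d) k := hQ fun d => by simp
  rw [hset, Set.ncard_coe_finset, Finset.card_eq_sum_card_fiberwise
    (f := fun u d => min (u d) k)
    (t := {t ∈ Fintype.piFinset (fun _ : D => range (k + 1)) | Q t})]
  · refine Finset.sum_congr rfl fun t ht => ?_
    rw [Finset.filter_filter]
    congr 1
    refine Finset.filter_congr fun u _ => and_iff_right_of_imp ?_
    rintro rfl
    exact (hQmin u).2 (Finset.mem_filter.1 ht).2
  · intro u hu
    simpa [Fintype.mem_piFinset, ← hQmin] using (Finset.mem_filter.1 hu).2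

theorem DependsOnTruncation.isEventuallyPolynomial_ncard (F : Type*) [Field F] [CharZero F]
    {k : ℕ} {Q : (D → ℕ) → Prop} (hQ : DependsOnTruncation k Q) :
    IsEventuallyPolynomial fun n => ({u : D → ℕ | ∑ d, u d = n ∧ Q u}.ncard : F) := by
  classical
  set T : Finset (D → ℕ) := {t ∈ Fintype.piFinset (fun _ : D => range (k + 1)) | Q t}
  have hle {t : D → ℕ} (ht : t ∈ T) (d : D) : t d ≤ k :=
    Nat.lt_succ_iff.1 <| Finset.mem_range.1 <|
      Fintype.mem_piFinset.1 (Finset.mem_filter.1 ht).1 d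
  refine (IsEventuallyPolynomial.sum T fun t =>
    isEventuallyPolynomial_multichoose_sub F (#{d | t d = k}) (∑ d, t d)).congr ?_
  filter_upwards [(eventually_all_finset T).2 fun t _ => eventually_ge_atTop (∑ d, t d)] with n hn
  rw [ncard_eq_sum_truncation hQ, Nat.cast_sum]
  exact Finset.sum_congr rfl fun t ht => by
    rw [card_filter_truncation_piAntidiag (hn t ht) (hle ht)]

end Truncation

section SquarefreeMonomialIdeals

variable {σ τ : Type*}

theorem ker_killCompl_subtype_val (R : Type*) [CommRing R] (C : Set σ) :
    RingHom.ker (killCompl (R := R) (Subtype.val_injective (p := (· ∈ Cᶜ)))) =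
      Ideal.span (X '' C) := by
  ext p
  rw [RingHom.mem_ker, mem_ideal_span_X_image]
  constructor
  · intro hp m hm
    by_contra! hmC
    have hsupp : (m.support : Set σ) ⊆ Set.range (Subtype.val : ↥Cᶜ → σ) := fun v hv =>
      ⟨⟨v, fun hvC => Finsupp.mem_support_iff.1 hv (hmC v hvC)⟩, rfl⟩
    rw [mem_support_iff, ← Finsupp.mapDomain_comapDomain _ Subtype.val_injective m hsupp,
      ← coeff_killCompl Subtype.val_injective, hp] at hm
    exact hm rfl
  · intro hp
    ext m
    rw [coeff_killCompl, coeff_zero]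
    by_contra hm
    obtain ⟨v, hvC, hv⟩ := hp _ (mem_support_iff.2 hm)
    exact hv <| Finsupp.mapDomain_of_notMem_range _ _ <| by simpa using hvC

theorem isPrime_span_X_image (R : Type*) [CommRing R] [IsDomain R] (C : Set σ) :
    (Ideal.span (X '' C) : Ideal (MvPolynomial σ R)).IsPrime :=
  ker_killCompl_subtype_val R C ▸ RingHom.ker_isPrime _

theorem X_mem_span_X_image_iff (R : Type*) [CommSemiring R] [Nontrivial R] {C : Set σ} {v : σ} :
    (X v : MvPolynomial σ R) ∈ Ideal.span (X '' C) ↔ v ∈ C := by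
  classical
  rw [mem_ideal_span_X_image, support_X]
  simp [Finsupp.single_apply]

theorem span_X_image_le_iff {R : Type*} [CommSemiring R] {C : Set σ}
    {P : Ideal (MvPolynomial σ R)} :
    Ideal.span (X '' C) ≤ P ↔ C ⊆ {v | (X v : MvPolynomial σ R) ∈ P} := by
  rw [Ideal.span_le, Set.image_subset_iff]
  rfl

theorem span_X_image_le_span_X_image_iff (R : Type*) [CommSemiring R] [Nontrivial R]
    {C C' : Set σ} :
    (Ideal.span (X '' C) : Ideal (MvPolynomial σ R)) ≤ Ideal.span (X '' C') ↔ C ⊆ C' := by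
  simp only [span_X_image_le_iff, X_mem_span_X_image_iff, Set.ofPred_mem_eq]

theorem span_X_image_injective (R : Type*) [CommSemiring R] [Nontrivial R] :
    Function.Injective fun C : Set σ => (Ideal.span (X '' C) : Ideal (MvPolynomial σ R)) :=
  fun _ _ h => ((span_X_image_le_span_X_image_iff R).1 h.le).antisymm
    ((span_X_image_le_span_X_image_iff R).1 h.ge)

theorem map_rename_span_X_image (R : Type*) [CommSemiring R] (f : σ → τ) (C : Set σ) :
    Ideal.map (rename f : MvPolynomial σ R →ₐ[R] MvPolynomial τ R) (Ideal.span (X '' C)) =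
      Ideal.span (X '' (f '' C)) := by
  simp only [Ideal.map_span, Set.image_image, rename_X]

/-- The squarefree monomial ideal whose generators have the sets in `E` as supports. -/
def edgeIdeal (R : Type*) [CommSemiring R] (E : Set (Finset σ)) : Ideal (MvPolynomial σ R) :=
  Ideal.span ((fun e => ∏ v ∈ e, X v) '' E)

/-- A vertex cover of the hypergraph `E`: a set of vertices meeting every edge. -/
def IsCover (E : Set (Finset σ)) (C : Set σ) : Prop :=
  ∀ e ∈ E, ∃ v ∈ e, v ∈ C

theorem IsCover.mono {E : Set (Finset σ)} {C C' : Set σ} (hC : IsCover E C) (h : C ⊆ C') :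
    IsCover E C' := fun e he =>
  (hC e he).imp fun _ hv => ⟨hv.1, h hv.2⟩

theorem edgeIdeal_le_iff {R : Type*} [CommSemiring R] {E : Set (Finset σ)}
    {P : Ideal (MvPolynomial σ R)} [P.IsPrime] :
    edgeIdeal R E ≤ P ↔ IsCover E {v | (X v : MvPolynomial σ R) ∈ P} := by
  rw [edgeIdeal, Ideal.span_le, Set.image_subset_iff]
  exact forall₂_congr fun e _ => Ideal.IsPrime.prod_mem_iff

variable (R : Type*) [CommRing R] [IsDomain R] (E : Set (Finset σ))

theorem edgeIdeal_le_span_X_image_iff {C : Set σ} :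
    edgeIdeal R E ≤ Ideal.span (X '' C) ↔ IsCover E C := by
  have := isPrime_span_X_image R C
  simp only [edgeIdeal_le_iff, X_mem_span_X_image_iff, Set.ofPred_mem_eq]

theorem minimalPrimes_edgeIdeal :
    (edgeIdeal R E).minimalPrimes =
      (fun C => Ideal.span (X '' C)) '' {C | Minimal (IsCover E) C} := by
  have span_mem {C : Set σ} (hC : IsCover E C) :
      (Ideal.span (X '' C) : Ideal (MvPolynomial σ R)).IsPrime ∧
        edgeIdeal R E ≤ Ideal.span (X '' C) :=
    ⟨isPrime_span_X_image R C, (edgeIdeal_le_span_X_image_iff R E).2 hC⟩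
  ext P
  constructor
  · rintro ⟨⟨hP, hEP⟩, hmin⟩
    have hcover := edgeIdeal_le_iff.1 hEP
    have hle := span_X_image_le_iff.2 (subset_refl {v | (X v : MvPolynomial σ R) ∈ P})
    refine ⟨_, ⟨hcover, fun C hC hCP => ?_⟩, hle.antisymm (hmin (span_mem hcover) hle)⟩
    exact (span_X_image_le_span_X_image_iff R).1 <|
      hle.trans <| hmin (span_mem hC) (span_X_image_le_iff.2 hCP)
  · rintro ⟨C, ⟨hC, hmin⟩, rfl⟩
    refine ⟨span_mem hC, ?_⟩
    rintro Q ⟨hQ, hEQ⟩ hQC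
    refine span_X_image_le_iff.2 (hmin (edgeIdeal_le_iff.1 hEQ) fun v hv => ?_)
    exact (X_mem_span_X_image_iff R).1 (hQC hv)

end SquarefreeMonomialIdeals

section FiberCard

variable {ι κ D : Type*} [Fintype ι] [Fintype κ] [DecidableEq D]

/-- The vector of fiber cardinalities of `f`. It determines `f` up to permutations of the
domain. -/
def fiberCard (f : ι → D) : D → ℕ :=
  fun d => #{i | f i = d}

theorem fiberCard_le_card (f : ι → D) (d : D) : fiberCard f d ≤ Fintype.card ι :=
  Finset.card_le_univ _

theorem fiberCard_pos_iff {f : ι → D} {d : D} : 0 < fiberCard f d ↔ d ∈ Set.range f := by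
  simp [fiberCard, Finset.card_pos, Finset.Nonempty]

theorem sum_fiberCard [Fintype D] (f : ι → D) : ∑ d, fiberCard f d = Fintype.card ι :=
  (Finset.card_eq_sum_card_fiberwise fun _ _ => Finset.mem_coe.2 (Finset.mem_univ _)).symm

theorem fiberCard_le_iff {g : κ → D} {f : ι → D} :
    fiberCard g ≤ fiberCard f ↔ ∃ τ : κ ↪ ι, f ∘ τ = g := by
  constructor
  · intro h
    have e (d : D) : Nonempty ({j // g j = d} ↪ {i // f i = d}) :=
      Function.Embedding.nonempty_of_card_le <| by
        rw [Fintype.card_subtype, Fintype.card_subtype]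
        exact h d
    replace e (d : D) := (e d).some
    refine ⟨(Equiv.sigmaFiberEquiv g).symm.toEmbedding.trans <|
      (Function.Embedding.sigmaMap (.refl D) e).trans (Equiv.sigmaFiberEquiv f).toEmbedding, ?_⟩
    ext j
    exact (e (g j) ⟨j, rfl⟩).2
  · rintro ⟨τ, rfl⟩ d
    exact Finset.card_le_card_of_injOn τ (fun j hj => by simpa using hj) τ.injective.injOn

theorem fiberCard_comp_equiv (f : ι → D) (e : κ ≃ ι) : fiberCard (f ∘ e) = fiberCard f :=
  le_antisymm (fiberCard_le_iff.2 ⟨e.toEmbedding, rfl⟩)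
    (fiberCard_le_iff.2 ⟨e.symm.toEmbedding, by ext; simp⟩)

theorem fiberCard_eq_iff {f g : ι → D} :
    fiberCard f = fiberCard g ↔ ∃ π : Equiv.Perm ι, g ∘ π = f := by
  constructor
  · intro h
    obtain ⟨τ, hτ⟩ := fiberCard_le_iff.1 h.le
    exact ⟨Equiv.ofBijective τ (Finite.injective_iff_bijective.1 τ.injective), hτ⟩
  · rintro ⟨π, rfl⟩
    exact fiberCard_comp_equiv g π

theorem fiberCard_sigma_fst [Fintype D] (u : D → ℕ) :
    fiberCard (Sigma.fst : (Σ d, Fin (u d)) → D) = u := by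
  ext d
  rw [fiberCard, ← Fintype.card_subtype, Fintype.card_congr (Equiv.sigmaSubtype d),
    Fintype.card_fin]

theorem exists_fiberCard_eq [Fintype D] {u : D → ℕ} (hu : ∑ d, u d = Fintype.card ι) :
    ∃ f : ι → D, fiberCard f = u := by
  obtain ⟨e⟩ : Nonempty (ι ≃ Σ d, Fin (u d)) := Fintype.card_eq.1 (by simp [hu])
  exact ⟨Sigma.fst ∘ e, by rw [fiberCard_comp_equiv, fiberCard_sigma_fst]⟩

theorem fiberCard_update [DecidableEq ι] (f : ι → D) (i : ι) (d : D) :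
    fiberCard (Function.update f i d) = fiberCard f - Pi.single (f i) 1 + Pi.single d 1 := by
  have split (g : ι → D) (e : D) :
      fiberCard g e = (if g i = e then 1 else 0) +
        ∑ j ∈ univ.erase i, if g j = e then 1 else 0 := by
    rw [fiberCard, Finset.card_filter]
    exact (Finset.add_sum_erase _ _ (Finset.mem_univ i)).symm
  ext e
  have hrest : (∑ j ∈ univ.erase i, if Function.update f i d j = e then 1 else 0) =
      ∑ j ∈ univ.erase i, if f j = e then 1 else 0 :=
    Finset.sum_congr rfl fun j hj => by rw [Function.update_of_ne (Finset.ne_of_mem_erase hj)]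
  rw [Pi.add_apply, Pi.sub_apply, split, split f, hrest, Function.update_self]
  simp only [Pi.single_apply, eq_comm (a := e)]
  omega

end FiberCard

section Placements

variable {S α ι κ : Type*} [Fintype κ]

/-- The copy of the support of the 0-1 matrix `B`, whose columns are given as sets of rows, with
column `j` moved to column `τ j`. -/
def placement (B : κ → Finset α) (τ : κ ↪ ι) : Finset (α × ι) :=
  (univ.sigma B).map
    ⟨fun x => (x.2, τ x.1), fun x y h => by
      obtain ⟨h₂, h₁⟩ := Prod.mk.inj h
      exact Sigma.ext (τ.injective h₁) (heq_of_eq h₂)⟩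

/-- The hypergraph of all copies of the matrices `A i` inside the columns `ι`. -/
def placements (A : S → κ → Finset α) (ι : Type*) : Set (Finset (α × ι)) :=
  {e | ∃ i, ∃ τ : κ ↪ ι, e = placement (A i) τ}

theorem mem_placement {B : κ → Finset α} {τ : κ ↪ ι} {v : α × ι} :
    v ∈ placement B τ ↔ ∃ j, v.1 ∈ B j ∧ τ j = v.2 := by
  simp only [placement, Finset.mem_map, Finset.mem_sigma, Finset.mem_univ, true_and,
    Sigma.exists, Prod.ext_iff]
  exact exists_congr fun j =>
    ⟨fun ⟨_, ha, h₁, h₂⟩ => ⟨h₁ ▸ ha, h₂⟩, fun ⟨ha, h⟩ => ⟨v.1, ha, rfl, h⟩⟩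

theorem prod_placement {M : Type*} [CommMonoid M] (B : κ → Finset α) (τ : κ ↪ ι)
    (f : α × ι → M) : ∏ v ∈ placement B τ, f v = ∏ j, ∏ a ∈ B j, f (a, τ j) := by
  simp only [placement, Finset.prod_map, Finset.prod_sigma]
  rfl

/-- Column `j` of a set of matrix positions, as a set of rows. -/
def column (C : Set (α × ι)) (j : ι) : Set α :=
  {a | (a, j) ∈ C}

open scoped Classical in
theorem column_sdiff_singleton (C : Set (α × ι)) (v : α × ι) :
    column (C \ {v}) = Function.update (column C) v.2 (column C v.2 \ {v.1}) := by
  ext j a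
  obtain rfl | hj := eq_or_ne j v.2
  · simp [column, Prod.ext_iff]
  · simp [column, Prod.ext_iff, hj]

theorem exists_column_eq (f : ι → Set α) : ∃ C : Set (α × ι), column C = f :=
  ⟨{v | v.1 ∈ f v.2}, rfl⟩

theorem column_comp_perm_eq_iff {C C' : Set (α × ι)} {π : Equiv.Perm ι} :
    column C' ∘ π = column C ↔ C' = (fun v => (v.1, π v.2)) '' C := by
  have himage : (fun v : α × ι => (v.1, π v.2)) '' C = {v | (v.1, π.symm v.2) ∈ C} :=
    ((Equiv.refl α).prodCongr π).image_eq_preimage_symm C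
  rw [himage, ← Equiv.eq_comp_symm]
  constructor
  · intro h
    ext ⟨a, j⟩
    exact Set.ext_iff.1 (congrFun h j) a
  · rintro rfl
    rfl

theorem isCover_placements_iff {A : S → κ → Finset α} {C : Set (α × ι)} :
    IsCover (placements A ι) C ↔
      ∀ i, ∀ τ : κ ↪ ι, ∃ j, ¬ Disjoint (A i j : Set α) (column C (τ j)) := by
  simp only [IsCover, placements, Set.mem_ofPred_eq, Set.not_disjoint_iff, Finset.mem_coe]
  constructor
  · intro h i τ
    obtain ⟨⟨a, _⟩, hv, hvC⟩ := h _ ⟨i, τ, rfl⟩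
    obtain ⟨j, ha, rfl⟩ := mem_placement.1 hv
    exact ⟨j, a, ha, hvC⟩
  · rintro h _ ⟨i, τ, rfl⟩
    obtain ⟨j, a, ha, haC⟩ := h i τ
    exact ⟨(a, τ j), mem_placement.2 ⟨j, ha, rfl⟩, haC⟩

end Placements

section ColumnCount

variable {S α ι κ : Type*} [Fintype ι] [Fintype κ]

open scoped Classical in
/-- The number of columns of `C` of each type `T : Set α`: a complete invariant of `C` up to
column permutations. -/
def columnCount (C : Set (α × ι)) : Set α → ℕ :=
  fiberCard (column C)

theorem columnCount_eq_iff {C C' : Set (α × ι)} :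
    columnCount C = columnCount C' ↔
      ∃ π : Equiv.Perm ι, C' = (fun v => (v.1, π v.2)) '' C := by
  simp only [columnCount, fiberCard_eq_iff, column_comp_perm_eq_iff]

theorem sum_columnCount [Fintype α] (C : Set (α × ι)) :
    ∑ T, columnCount C T = Fintype.card ι := by
  classical
  exact sum_fiberCard _

theorem exists_columnCount_eq [Fintype α] {u : Set α → ℕ} (hu : ∑ T, u T = Fintype.card ι) :
    ∃ C : Set (α × ι), columnCount C = u := by
  classical
  obtain ⟨f, hf⟩ := exists_fiberCard_eq hu
  obtain ⟨C, rfl⟩ := exists_column_eq f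
  exact ⟨C, hf⟩

open scoped Classical in
/-- A set with column counts `u` misses some copy of some matrix `A i`: there are enough columns
to choose one disjoint from each column of `A i`. -/
def MissesPlacement (A : S → κ → Finset α) (u : Set α → ℕ) : Prop :=
  ∃ i, ∃ g : κ → Set α, (∀ j, Disjoint (A i j : Set α) (g j)) ∧ fiberCard g ≤ u

open scoped Classical in
/-- The condition on the column counts `u` of a cover of `placements A ι` that makes it minimal:
replacing a column `T` by `T \ {a}` always uncovers some copy. -/
def IsMinimalCoverCount (A : S → κ → Finset α) (u : Set α → ℕ) : Prop :=
  ¬ MissesPlacement A u ∧ ∀ T, 0 < u T → ∀ a ∈ T,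
    MissesPlacement A (u - Pi.single T 1 + Pi.single (T \ {a}) 1)

variable (A : S → κ → Finset α)

theorem isCover_placements_iff_columnCount {C : Set (α × ι)} :
    IsCover (placements A ι) C ↔ ¬ MissesPlacement A (columnCount C) := by
  rw [isCover_placements_iff, ← not_iff_not, not_not]
  push Not
  refine exists_congr fun i => ?_
  simp only [columnCount, fiberCard_le_iff]
  constructor
  · rintro ⟨τ, hτ⟩
    exact ⟨column C ∘ τ, hτ, τ, rfl⟩
  · rintro ⟨_, hg, τ, rfl⟩
    exact ⟨τ, hg⟩

theorem minimal_isCover_placements_iff {C : Set (α × ι)} :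
    Minimal (IsCover (placements A ι)) C ↔ IsMinimalCoverCount A (columnCount C) := by
  classical
  rw [Set.minimal_iff_forall_sdiff_singleton fun _ _ hC h => hC.mono h,
    isCover_placements_iff_columnCount]
  refine and_congr_right fun _ => ?_
  simp only [isCover_placements_iff_columnCount, not_not]
  have count_sdiff (v : α × ι) : columnCount (C \ {v}) = columnCount C -
      Pi.single (column C v.2) 1 + Pi.single (column C v.2 \ {v.1}) 1 := by
    rw [columnCount, column_sdiff_singleton, fiberCard_update, columnCount]
  simp only [count_sdiff]
  constructor
  · intro h T hT a ha
    obtain ⟨j, rfl⟩ := fiberCard_pos_iff.1 hT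
    exact h (a, j) ha
  · intro h v hv
    exact h _ (fiberCard_pos_iff.2 ⟨v.2, rfl⟩) v.1 hv

theorem columnCount_image_minimal_isCover [Fintype α] :
    columnCount '' {C : Set (α × ι) | Minimal (IsCover (placements A ι)) C} =
      {u | ∑ T, u T = Fintype.card ι ∧ IsMinimalCoverCount A u} := by
  ext u
  constructor
  · rintro ⟨C, hC, rfl⟩
    exact ⟨sum_columnCount C, (minimal_isCover_placements_iff A).1 hC⟩
  · rintro ⟨hsum, hu⟩
    obtain ⟨C, rfl⟩ := exists_columnCount_eq hsum
    exact ⟨C, (minimal_isCover_placements_iff A).2 hu, rfl⟩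

theorem dependsOnTruncation_missesPlacement :
    DependsOnTruncation (Fintype.card κ) (MissesPlacement A) := by
  intro u w huw
  have le_iff (k : ℕ) (T : Set α) (hk : k ≤ Fintype.card κ) : k ≤ u T ↔ k ≤ w T := by
    have := huw T
    omega
  exact exists_congr fun _ => exists_congr fun g => and_congr_right fun _ =>
    forall_congr' fun T => le_iff _ T (fiberCard_le_card g T)

/-- The extra `1` accounts for the column that is lost when an entry is deleted. -/
theorem dependsOnTruncation_isMinimalCoverCount :
    DependsOnTruncation (Fintype.card κ + 1) (IsMinimalCoverCount A) := by
  classical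
  intro u w huw
  refine and_congr (not_congr (dependsOnTruncation_missesPlacement A fun T => ?_)) <|
    forall_congr' fun T => imp_congr ?_ <| forall₂_congr fun a _ =>
      dependsOnTruncation_missesPlacement A fun U => ?_
  · have := huw T
    omega
  · have := huw T
    omega
  · have := huw U
    simp only [Pi.add_apply, Pi.sub_apply, Pi.single_apply]
    split_ifs <;> omega

end ColumnCount

section ChainIdeal

variable {c m n s : ℕ}

theorem exists_castLEEmb_trans_perm_eq (hmn : m ≤ n) (τ : Fin m ↪ Fin n) :
    ∃ π : Equiv.Perm (Fin n), (Fin.castLEEmb hmn).trans π.toEmbedding = τ := by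
  have := Equiv.Perm.isMultiplyPretransitive (Fin n) m
  obtain ⟨π, hπ⟩ := MulAction.exists_smul_eq (Equiv.Perm (Fin n)) (Fin.castLEEmb hmn) τ
  exact ⟨π, hπ⟩

theorem rename_matMon_pad (K : Type*) [CommSemiring K] (hmn : m ≤ n) (B : Fin m → Finset (Fin c))
    (π : Equiv.Perm (Fin n)) :
    rename (fun v : Fin c × Fin n => (v.1, π v.2)) (matMon K (pad n B)) =
      ∏ v ∈ placement B ((Fin.castLEEmb hmn).trans π.toEmbedding), X v := by
  rw [prod_placement]
  simp only [matMon, map_prod, rename_X]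
  refine (Fintype.prod_of_injective (Fin.castLE hmn) (Fin.castLE_injective hmn) _ _
    (fun j hj => ?_) fun j => ?_).symm
  · have hjm : ¬ (j : ℕ) < m := fun h => hj ⟨⟨j, h⟩, rfl⟩
    simp [pad, hjm]
  · simp [pad]

theorem chainIdeal_eq_edgeIdeal (K : Type*) [CommSemiring K] (hmn : m ≤ n)
    (A : Fin s → Fin m → Finset (Fin c)) :
    chainIdeal K A n = edgeIdeal K (placements A (Fin n)) := by
  rw [chainIdeal, edgeIdeal]
  congr 1
  ext p
  constructor
  · rintro ⟨i, π, rfl⟩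
    exact ⟨_, ⟨i, _, rfl⟩, (rename_matMon_pad K hmn (A i) π).symm⟩
  · rintro ⟨_, ⟨i, τ, rfl⟩, rfl⟩
    obtain ⟨π, rfl⟩ := exists_castLEEmb_trans_perm_eq hmn τ
    exact ⟨i, π, (rename_matMon_pad K hmn (A i) π).symm⟩

end ChainIdeal

theorem ncard_image_eq_ncard_image_of_eq_iff {α β γ : Type*} {s : Set α} {f : α → β} {g : α → γ}
    (h : ∀ x ∈ s, ∀ y ∈ s, f x = f y ↔ g x = g y) : (f '' s).ncard = (g '' s).ncard := by
  choose r hrs hfr using fun b (hb : b ∈ f '' s) => hb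
  refine Set.ncard_congr (fun b hb => g (r b hb)) (fun b hb => ⟨_, hrs b hb, rfl⟩)
    (fun b b' hb hb' heq => ?_) ?_
  · rw [← hfr b hb, ← hfr b' hb']
    exact (h _ (hrs b hb) _ (hrs b' hb')).2 heq
  · rintro _ ⟨x, hx, rfl⟩
    have hfx : f x ∈ f '' s := ⟨x, hx, rfl⟩
    exact ⟨f x, hfx, (h _ (hrs _ hfx) x hx).1 (hfr _ hfx)⟩

section Orbits

variable {α ι : Type*} [Fintype ι]

/-- The orbit of the ideal `P` under permutations of the columns of the variables. -/
def permOrbit {R : Type*} [CommSemiring R] (P : Ideal (MvPolynomial (α × ι) R)) :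
    Set (Ideal (MvPolynomial (α × ι) R)) :=
  {Q | ∃ π : Equiv.Perm ι,
    Q = Ideal.map
      (rename (fun v : α × ι => (v.1, π v.2)) :
        MvPolynomial (α × ι) R →ₐ[R] MvPolynomial (α × ι) R) P}

theorem permOrbit_span_X_image (R : Type*) [CommSemiring R] (C : Set (α × ι)) :
    permOrbit (Ideal.span (X '' C) : Ideal (MvPolynomial (α × ι) R)) =
      (fun C' => Ideal.span (X '' C')) '' {C' | columnCount C = columnCount C'} := by
  ext Q
  simp only [permOrbit, map_rename_span_X_image, columnCount_eq_iff, Set.mem_image,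
    Set.mem_ofPred_eq]
  constructor
  · rintro ⟨π, rfl⟩
    exact ⟨_, ⟨π, rfl⟩, rfl⟩
  · rintro ⟨_, ⟨π, rfl⟩, rfl⟩
    exact ⟨π, rfl⟩

theorem permOrbit_span_X_image_eq_iff (R : Type*) [CommSemiring R] [Nontrivial R]
    {C C' : Set (α × ι)} :
    permOrbit (Ideal.span (X '' C) : Ideal (MvPolynomial (α × ι) R)) =
      permOrbit (Ideal.span (X '' C')) ↔ columnCount C = columnCount C' := by
  rw [permOrbit_span_X_image, permOrbit_span_X_image,
    (Set.image_injective.2 (span_X_image_injective R)).eq_iff]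
  exact ⟨fun h => h.ge rfl, fun h => by rw [h]⟩

theorem ncard_permOrbit_minimalPrimes_chainIdeal (K : Type*) [CommRing K] [IsDomain K]
    {c m n s : ℕ} (hmn : m ≤ n) (A : Fin s → Fin m → Finset (Fin c)) :
    {O | ∃ P ∈ (chainIdeal K A n).minimalPrimes, O = permOrbit P}.ncard =
      {u : Set (Fin c) → ℕ | ∑ T, u T = n ∧ IsMinimalCoverCount A u}.ncard := by
  have horbits : {O | ∃ P ∈ (chainIdeal K A n).minimalPrimes, O = permOrbit P} =
      (fun C => permOrbit (Ideal.span (X '' C))) ''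
        {C | Minimal (IsCover (placements A (Fin n))) C} := by
    rw [chainIdeal_eq_edgeIdeal K hmn, minimalPrimes_edgeIdeal]
    ext O
    simp [eq_comm]
  have hcounts := columnCount_image_minimal_isCover (ι := Fin n) A
  rw [Fintype.card_fin] at hcounts
  rw [horbits, ← hcounts]
  exact ncard_image_eq_ncard_image_of_eq_iff fun _ _ _ _ => permOrbit_span_X_image_eq_iff K

end Orbits

theorem minimal_primes_orbit_count_polynomial_general (K : Type*) [CommRing K] [IsDomain K]
    {c m s : ℕ} (A : Fin s → Fin m → Finset (Fin c)) :
    ∃ (p : Polynomial ℚ) (N : ℕ), m ≤ N ∧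
      ∀ n : ℕ, N ≤ n →
        (Set.ncard {O : Set (Ideal (MvPolynomial (Fin c × Fin n) K)) |
            ∃ P ∈ (chainIdeal K A n).minimalPrimes, O = permOrbit P} : ℚ) = p.eval (n : ℚ) := by
  obtain ⟨p, hp⟩ := (dependsOnTruncation_isMinimalCoverCount A).isEventuallyPolynomial_ncard ℚ
  obtain ⟨N, hN⟩ := eventually_atTop.1 (hp.and (eventually_ge_atTop m))
  refine ⟨p, N, (hN N le_rfl).2, fun n hn => ?_⟩
  rw [ncard_permOrbit_minimalPrimes_chainIdeal K (hN n hn).2]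
  exact (hN n hn).1

/-- **Counting orbits of minimal primes.**  For a `Sym`-invariant chain of squarefree
monomial ideals, the number of `Sym(n)`-orbits of minimal primes of `I_n` is eventually a
polynomial in `n`. -/
theorem minimal_primes_orbit_count_polynomial (K : Type*) [Field K] {c m s : ℕ}
    (hc : 0 < c) (hm : 0 < m) (hs : 0 < s)
    (A : Fin s → Fin m → Finset (Fin c)) (hA : ∀ i, ∃ j, A i j ≠ ∅) :
    ∃ (p : Polynomial ℚ) (N : ℕ), m ≤ N ∧
      ∀ n : ℕ, N ≤ n →
        (Set.ncard {O : Set (Ideal (MvPolynomial (Fin c × Fin n) K)) |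
            ∃ P ∈ (chainIdeal K A n).minimalPrimes,
              O = {Q | ∃ σ : Equiv.Perm (Fin n),
                Q = Ideal.map
                      (rename (fun v : Fin c × Fin n => (v.1, σ v.2)) :
                        MvPolynomial (Fin c × Fin n) K →ₐ[K]
                          MvPolynomial (Fin c × Fin n) K) P}} : ℚ) =
          p.eval (n : ℚ) := by
  exact minimal_primes_orbit_count_polynomial_general K A

end
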